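/- The maximal size of a clique in Γ_{-1,0} is twelve, and there are no maximal cliques of size eleven in Γ_{-1,0}. Moreover, there are exactly 179200 cliques of size twelve in Γ_{-1,0}, and the Weyl group W acts transitively on the set of cliques of size twelve in Γ_{-1,0}. -/

import Mathlib

noncomputable section

/-- The standard dot product on ℝ^8. -/
def dot (a b : Fin 8 → ℝ) : ℝ := ∑ i, a i * b i

/-- Membership in the E8 lattice Λ: all coordinates are integers or all lie in ℤ + 1/2,
and the coordinates sum to an even integer. -/
def inLambda (a : Fin 8 → ℝ) : Prop :=
  ((∀ i, ∃ n : ℤ, a i = n) ∨ (∀ i, ∃ n : ℤ, a i = n + 1 / 2)) ∧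
    ∃ n : ℤ, (∑ i, a i) = 2 * n

/-- The E8 root system E: lattice vectors of squared norm 2. -/
def isRoot (a : Fin 8 → ℝ) : Prop := inLambda a ∧ dot a a = 2

/-- The Weyl group W: linear isometries of ℝ^8 mapping the root system E onto itself. -/
def IsWeyl (w : (Fin 8 → ℝ) ≃ₗ[ℝ] (Fin 8 → ℝ)) : Prop :=
  (∀ a b : Fin 8 → ℝ, dot (w a) (w b) = dot a b) ∧
    (⇑w '' {a | isRoot a} = {a | isRoot a})

/-- A clique in the colored graph `Γ_c`: a set of roots whose pairwise dot products
lie in the color set `c`. -/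
def IsClique (c : Set ℝ) (K : Finset (Fin 8 → ℝ)) : Prop :=
  (∀ e ∈ K, isRoot e) ∧ ∀ e ∈ K, ∀ f ∈ K, e ≠ f → dot e f ∈ c

/-- A maximal clique in `Γ_c`: a clique not properly contained in another clique. -/
def IsMaxClique (c : Set ℝ) (K : Finset (Fin 8 → ℝ)) : Prop :=
  IsClique c K ∧ ∀ K' : Finset (Fin 8 → ℝ), IsClique c K' → K ⊆ K' → K' = K

structure Z8 where
  (a0 a1 a2 a3 a4 a5 a6 a7 : ℤ)
deriving DecidableEq

def zd (x y : Z8) : ℤ :=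
  x.a0 * y.a0 + x.a1 * y.a1 + x.a2 * y.a2 + x.a3 * y.a3 +
  x.a4 * y.a4 + x.a5 * y.a5 + x.a6 * y.a6 + x.a7 * y.a7

def emb (x : Z8) : Fin 8 → ℝ :=
  ![x.a0 / 2, x.a1 / 2, x.a2 / 2, x.a3 / 2, x.a4 / 2, x.a5 / 2, x.a6 / 2, x.a7 / 2]

def zgen (S : List ℤ) : ℕ → ℤ → List (List ℤ)
  | 0, _ => [[]]
  | n + 1, b => S.flatMap fun x =>
      if x * x ≤ b then (zgen S n (b - x * x)).map (fun l => x :: l) else []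

def ofL : List ℤ → Z8
  | [a, b, c, d, e, f, g, h] => ⟨a, b, c, d, e, f, g, h⟩
  | _ => ⟨0, 0, 0, 0, 0, 0, 0, 0⟩

def zsum (x : Z8) : ℤ := x.a0 + x.a1 + x.a2 + x.a3 + x.a4 + x.a5 + x.a6 + x.a7

def zroots : List Z8 :=
  ((zgen [-2, 0, 2] 8 8 ++ zgen [-1, 1] 8 8).map ofL).filter
    fun x => decide (zd x x = 8) && decide (zsum x % 4 = 0)

def zr1 : Z8 := ⟨2, -2, 0, 0, 0, 0, 0, 0⟩
def zr2 : Z8 := ⟨0, 2, -2, 0, 0, 0, 0, 0⟩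
def zr5 : Z8 := ⟨-2, 0, 2, 0, 0, 0, 0, 0⟩
def zr3 : Z8 := ⟨0, 0, 0, 2, -2, 0, 0, 0⟩
def zr4 : Z8 := ⟨0, 0, 0, 0, 2, -2, 0, 0⟩

def zcls (S : List (Z8 × ℤ)) : List Z8 :=
  zroots.filter fun f => S.all fun s => decide (zd f s.1 = s.2)

def zlayer (cls : List Z8) (t : Z8) : ℕ → List Z8
  | 0 => [t]
  | n + 1 => cls.filter fun f => (zlayer cls t n).any fun g => decide (f = g) || decide (zd f g = 4)

def zstep (R : Z8 → Z8 → Bool) (n : ℕ) (f : List Z8 → List (List Z8)) : List Z8 → List (List Z8)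
  | [] => []
  | x :: xs => if xs.length < n then [] else
      (f (xs.filter (R x))).map (fun l => x :: l) ++ zstep R n f xs

def zsearch (R : Z8 → Z8 → Bool) : ℕ → List Z8 → List (List Z8)
  | 0 => fun _ => [[]]
  | n + 1 => zstep R n (zsearch R n)

def zok (x y : Z8) : Bool := decide (zd x y = 0) || decide (zd x y = -4)
def zorth (x y : Z8) : Bool := decide (zd x y = 0)

def zpool : List Z8 := (zcls [(zr1, 0), (zr2, 0)]).filter fun f => zok zr3 f && zok zr4 f
def zpool0 : List Z8 := zcls [(zr1, 0), (zr2, 0), (zr3, 0)]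

def zbase : List Z8 := [zr1, zr2, zr5, zr3, zr4]
def zL0 : List Z8 := [⟨0, 0, 0, -2, 0, 2, 0, 0⟩, ⟨0, 0, 0, 0, 0, 0, -2, -2⟩,
  ⟨0, 0, 0, 0, 0, 0, -2, 2⟩, ⟨-1, -1, -1, -1, -1, -1, 1, 1⟩, ⟨-1, -1, -1, 1, 1, 1, 1, -1⟩,
  ⟨1, 1, 1, -1, -1, -1, 1, -1⟩, ⟨1, 1, 1, 1, 1, 1, 1, 1⟩]
def zK0 : List Z8 := zbase ++ zL0

def zp : Z8 := ⟨0, 0, 0, 0, 0, 0, 2, 2⟩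
def zq : Z8 := ⟨0, 0, 0, 0, 0, 0, 2, -2⟩

def zrefl (p x : Z8) : Z8 :=
  let k := zd x p / 4
  ⟨x.a0 - k * p.a0, x.a1 - k * p.a1, x.a2 - k * p.a2, x.a3 - k * p.a3,
   x.a4 - k * p.a4, x.a5 - k * p.a5, x.a6 - k * p.a6, x.a7 - k * p.a7⟩

def zflips : List (List Z8) := [[], [zp], [zq], [zp, zq]]

def zcode (x : Z8) : ℤ :=
  x.a7 + 5 * (x.a6 + 5 * (x.a5 + 5 * (x.a4 + 5 * (x.a3 + 5 * (x.a2 + 5 * (x.a1 + 5 * x.a0))))))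
    + 1000000 * (x.a0 % 2)

def zchain : List Z8 → Bool
  | [] => true
  | x :: xs => (match xs with
    | [] => true
    | y :: _ => decide (zcode x < zcode y)) && zchain xs

set_option synthInstance.maxSize 2000 in
set_option synthInstance.maxHeartbeats 400000 in
theorem c_all :
    ((zcls []).length = 240 ∧ zchain zroots = true) ∧
    (zlayer (zcls []) zr1 3 = zcls []) ∧
    (zlayer (zcls [(zr1, -4)]) zr2 3 = zcls [(zr1, -4)]) ∧
    (zlayer (zcls [(zr1, 0), (zr2, 0)]) zr3 3 = zcls [(zr1, 0), (zr2, 0)]) ∧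
    (zlayer (zcls [(zr1, 0), (zr2, 0), (zr3, -4)]) zr4 3 =
    zcls [(zr1, 0), (zr2, 0), (zr3, -4)]) ∧
    ((zcls [(zr1, -4)]).length = 56) ∧
    ((zcls [(zr1, 0), (zr2, 0)]).length = 72) ∧
    ((zcls [(zr1, 0), (zr2, 0), (zr3, -4)]).length = 20) ∧
    (zsearch zorth 7 zpool0 = []) ∧
    (zsearch zok 8 zpool = []) ∧
    (∀ l ∈ zsearch zok 6 zpool, ∃ x ∈ zpool, x ∉ l ∧ ∀ y ∈ l, zok x y = true) ∧
    ((zsearch zok 7 zpool).length = 4 ∧ zL0 ∈ zsearch zok 7 zpool ∧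
    (∀ l ∈ zsearch zok 7 zpool, ∀ l' ∈ zsearch zok 7 zpool, l ≠ l' → ∃ x ∈ l, x ∉ zbase ++ l')
    ∧ (zsearch zok 7 zpool).Nodup) ∧
    (∀ l ∈ zsearch zok 7 zpool, (zbase ++ l).Nodup ∧ (zbase ++ l).length = 12 ∧
    (∀ x ∈ zbase ++ l, x ∈ zroots) ∧ ∀ x ∈ zbase ++ l, ∀ y ∈ zbase ++ l, x = y ∨ zok x y = true) ∧
    (∀ l ∈ zsearch zok 7 zpool, ∃ fs ∈ zflips, ∀ x ∈ zbase ++ l,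
    fs.foldr zrefl x ∈ zK0) ∧
    (zp ∈ zroots ∧ zq ∈ zroots ∧ ∀ x ∈ zroots, ∀ p ∈ [zp, zq], zd x p % 4 = 0) ∧
    (∀ x ∈ zroots, zd x x = 8 ∧ zsum x % 4 = 0 ∧
   ((x.a0 % 2 = 0 ∧ x.a1 % 2 = 0 ∧ x.a2 % 2 = 0 ∧ x.a3 % 2 = 0 ∧ 
    x.a4 % 2 = 0 ∧ x.a5 % 2 = 0 ∧ x.a6 % 2 = 0 ∧ x.a7 % 2 = 0) ∨
    (x.a0 % 2 = 1 ∧ x.a1 % 2 = 1 ∧ x.a2 % 2 = 1 ∧ x.a3 % 2 = 1 ∧ 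
    x.a4 % 2 = 1 ∧ x.a5 % 2 = 1 ∧ x.a6 % 2 = 1 ∧ x.a7 % 2 = 1))) := by
  decide +kernel

theorem c_card1 : (zcls []).length = 240 ∧ zchain zroots = true :=
  c_all.1
theorem c_layer1 : zlayer (zcls []) zr1 3 = zcls [] :=
  c_all.2.1
theorem c_layer2 : zlayer (zcls [(zr1, -4)]) zr2 3 = zcls [(zr1, -4)] :=
  c_all.2.2.1
theorem c_layer3 : zlayer (zcls [(zr1, 0), (zr2, 0)]) zr3 3 = zcls [(zr1, 0), (zr2, 0)] :=
  c_all.2.2.2.1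
theorem c_layer4 : zlayer (zcls [(zr1, 0), (zr2, 0), (zr3, -4)]) zr4 3 =
    zcls [(zr1, 0), (zr2, 0), (zr3, -4)] :=
  c_all.2.2.2.2.1
theorem c_card2 : (zcls [(zr1, -4)]).length = 56 :=
  c_all.2.2.2.2.2.1
theorem c_card3 : (zcls [(zr1, 0), (zr2, 0)]).length = 72 :=
  c_all.2.2.2.2.2.2.1
theorem c_card4 : (zcls [(zr1, 0), (zr2, 0), (zr3, -4)]).length = 20 :=
  c_all.2.2.2.2.2.2.2.1
theorem c_orth : zsearch zorth 7 zpool0 = [] :=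
  c_all.2.2.2.2.2.2.2.2.1
theorem c_s8 : zsearch zok 8 zpool = [] :=
  c_all.2.2.2.2.2.2.2.2.2.1
theorem c_s6 : ∀ l ∈ zsearch zok 6 zpool, ∃ x ∈ zpool, x ∉ l ∧ ∀ y ∈ l, zok x y = true :=
  c_all.2.2.2.2.2.2.2.2.2.2.1
theorem c_s7 : (zsearch zok 7 zpool).length = 4 ∧ zL0 ∈ zsearch zok 7 zpool ∧
    (∀ l ∈ zsearch zok 7 zpool, ∀ l' ∈ zsearch zok 7 zpool, l ≠ l' → ∃ x ∈ l, x ∉ zbase ++ l')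
    ∧ (zsearch zok 7 zpool).Nodup :=
  c_all.2.2.2.2.2.2.2.2.2.2.2.1
theorem c_s7c : ∀ l ∈ zsearch zok 7 zpool, (zbase ++ l).Nodup ∧ (zbase ++ l).length = 12 ∧
    (∀ x ∈ zbase ++ l, x ∈ zroots) ∧ ∀ x ∈ zbase ++ l, ∀ y ∈ zbase ++ l, x = y ∨ zok x y = true :=
  c_all.2.2.2.2.2.2.2.2.2.2.2.2.1
theorem c_flip : ∀ l ∈ zsearch zok 7 zpool, ∃ fs ∈ zflips, ∀ x ∈ zbase ++ l,
    fs.foldr zrefl x ∈ zK0 :=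
  c_all.2.2.2.2.2.2.2.2.2.2.2.2.2.1
theorem c_root : zp ∈ zroots ∧ zq ∈ zroots ∧ ∀ x ∈ zroots, ∀ p ∈ [zp, zq], zd x p % 4 = 0 :=
  c_all.2.2.2.2.2.2.2.2.2.2.2.2.2.2.1
theorem c_refl_root : ∀ x ∈ zroots, zd x x = 8 ∧ zsum x % 4 = 0 ∧
   ((x.a0 % 2 = 0 ∧ x.a1 % 2 = 0 ∧ x.a2 % 2 = 0 ∧ x.a3 % 2 = 0 ∧ 
    x.a4 % 2 = 0 ∧ x.a5 % 2 = 0 ∧ x.a6 % 2 = 0 ∧ x.a7 % 2 = 0) ∨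
    (x.a0 % 2 = 1 ∧ x.a1 % 2 = 1 ∧ x.a2 % 2 = 1 ∧ x.a3 % 2 = 1 ∧ 
    x.a4 % 2 = 1 ∧ x.a5 % 2 = 1 ∧ x.a6 % 2 = 1 ∧ x.a7 % 2 = 1)) :=
  c_all.2.2.2.2.2.2.2.2.2.2.2.2.2.2.2
theorem c_k2 : ∀ a ∈ zK0, (zK0.filter fun f => decide (zd f a = -4)).length = 2 := by
  decide +kernel
theorem c_k3 : ∀ a ∈ zK0, ∀ b ∈ zK0, zd a b = -4 →
    (zK0.filter fun f => decide (zd f a = 0) && decide (zd f b = 0)).length = 9 := by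
  decide +kernel
theorem c_k4 : ∀ a ∈ zK0, ∀ b ∈ zK0, zd a b = -4 → ∀ c ∈ zK0, zd c a = 0 → zd c b = 0 →
    (zK0.filter fun f => decide (zd f a = 0) && decide (zd f b = 0) && decide (zd f c = -4)).length
      = 2 := by
  decide +kernel
theorem c_tri : ∀ a ∈ zK0, ∀ b ∈ zK0, zd a b = -4 → ∃ c ∈ zK0, zd a c = -4 ∧ zd b c = -4 := by
  decide +kernel

abbrev V8 := Fin 8 → ℝ

theorem dot_comm (a b : V8) : dot a b = dot b a := by
  unfold dot; exact Finset.sum_congr rfl fun i _ => mul_comm _ _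
theorem dot_add_left (a b c : V8) : dot (a + b) c = dot a c + dot b c := add_dotProduct a b c
theorem dot_add_right (a b c : V8) : dot a (b + c) = dot a b + dot a c := dotProduct_add a b c
theorem dot_sub_left (a b c : V8) : dot (a - b) c = dot a c - dot b c := sub_dotProduct a b c
theorem dot_sub_right (a b c : V8) : dot a (b - c) = dot a b - dot a c := dotProduct_sub a b c
theorem dot_smul_left (k : ℝ) (a b : V8) : dot (k • a) b = k * dot a b := smul_dotProduct k a b
theorem dot_smul_right (k : ℝ) (a b : V8) : dot a (k • b) = k * dot a b := dotProduct_smul k a b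
theorem dot_neg_left (a b : V8) : dot (-a) b = - dot a b := neg_dotProduct a b
theorem dot_neg_right (a b : V8) : dot a (-b) = - dot a b := dotProduct_neg a b
theorem dot_sum_left {ι : Type*} (s : Finset ι) (f : ι → V8) (b : V8) :
    dot (∑ i ∈ s, f i) b = ∑ i ∈ s, dot (f i) b := sum_dotProduct s f b
theorem dot_sum_right {ι : Type*} (s : Finset ι) (f : ι → V8) (b : V8) :
    dot b (∑ i ∈ s, f i) = ∑ i ∈ s, dot b (f i) := dotProduct_sum b s f
theorem dot_self_nonneg (a : V8) : 0 ≤ dot a a :=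
  Finset.sum_nonneg fun i _ => mul_self_nonneg (a i)
theorem dot_self_zero (a : V8) (h : dot a a = 0) : a = 0 := dotProduct_self_eq_zero.1 h

theorem clique_vals {K : Finset V8} (hK : IsClique {-1, 0} K) {u v : V8} (hu : u ∈ K) (hv : v ∈ K)
    (h : u ≠ v) : dot u v = -1 ∨ dot u v = 0 := by
  simpa using hK.2 u hu v hv h

theorem op_bound (K : Finset V8) (hK : IsClique {-1, 0} K) (x : V8) :
    ∑ v ∈ K, dot x v ^ 2 ≤ 4 * dot x x := by
  have h1 := dot_self_nonneg (∑ v ∈ K, |dot x v| • v)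
  have h2 := dot_self_nonneg ((4 : ℝ) • x - ∑ v ∈ K, dot x v • v)
  set y := ∑ v ∈ K, dot x v • v with hy
  have hxy : dot x y = ∑ v ∈ K, dot x v ^ 2 := by
    rw [hy, dot_sum_right]
    exact Finset.sum_congr rfl fun v _ => by rw [dot_smul_right]; ring
  have hyy : dot y y = ∑ u ∈ K, ∑ v ∈ K, dot x u * dot x v * dot u v := by
    rw [hy, dot_sum_left]
    refine Finset.sum_congr rfl fun u _ => ?_
    rw [dot_sum_right]
    exact Finset.sum_congr rfl fun v _ => by rw [dot_smul_left, dot_smul_right]; ring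
  have hzz : dot (∑ v ∈ K, |dot x v| • v) (∑ v ∈ K, |dot x v| • v)
      = ∑ u ∈ K, ∑ v ∈ K, |dot x u| * |dot x v| * dot u v := by
    rw [dot_sum_left]
    refine Finset.sum_congr rfl fun u _ => ?_
    rw [dot_sum_right]
    exact Finset.sum_congr rfl fun v _ => by rw [dot_smul_left, dot_smul_right]; ring
  have hle : (∑ u ∈ K, ∑ v ∈ K, dot x u * dot x v * dot u v) +
      (∑ u ∈ K, ∑ v ∈ K, |dot x u| * |dot x v| * dot u v) ≤ 4 * ∑ v ∈ K, dot x v ^ 2 := by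
    rw [← Finset.sum_add_distrib, Finset.mul_sum]
    refine Finset.sum_le_sum fun u hu => ?_
    rw [← Finset.sum_add_distrib]
    have : 4 * dot x u ^ 2 = ∑ v ∈ K, if u = v then 4 * dot x u ^ 2 else 0 := by
      rw [Finset.sum_ite_eq]; simp [hu]
    rw [this]
    refine Finset.sum_le_sum fun v hv => ?_
    split_ifs with h
    · subst h
      rw [(hK.1 u hu).2, abs_mul_abs_self]; apply le_of_eq; ring
    · have := neg_abs_le (dot x u * dot x v)
      rw [abs_mul] at this
      rcases clique_vals hK hu hv h with h | h <;> rw [h] <;> linarith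
  rw [hzz] at h1
  rw [dot_sub_left, dot_sub_right, dot_sub_right, dot_smul_left, dot_smul_left, dot_smul_right,
    dot_smul_right, dot_comm y x, hyy, hxy] at h2
  linarith

theorem exists_tri (K : Finset V8) (hK : IsClique {-1, 0} K) (hc : K.card = 11) :
    ∃ u ∈ K, ∃ v ∈ K, ∃ x ∈ K, dot u v = -1 ∧ dot u x = -1 ∧ dot v x = -1 := by
  by_contra hno
  push Not at hno
  have hself : ∀ v ∈ K, dot v v = 2 := fun v hv => (hK.1 v hv).2
  set s2 := ∑ u ∈ K, ∑ v ∈ K, dot u v ^ 2 with hs2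
  set s3 := ∑ v ∈ K, ∑ u ∈ K, ∑ w ∈ K, dot u v * dot w v * dot u w with hs3
  have hdiag : ∑ v ∈ K, dot v v = 22 := by
    rw [Finset.sum_congr rfl hself]; simp [hc]; norm_num
  -- s2 ≤ 66
  have h66 : s2 ≤ 66 := by
    have h := dot_self_nonneg (∑ v ∈ K, v)
    rw [dot_sum_left] at h
    simp_rw [dot_sum_right] at h
    have : s2 + ∑ u ∈ K, ∑ v ∈ K, dot u v = ∑ u ∈ K, ∑ v ∈ K, if u = v then (6 : ℝ) else 0 := by
      rw [hs2, ← Finset.sum_add_distrib]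
      refine Finset.sum_congr rfl fun u hu => ?_
      rw [← Finset.sum_add_distrib]
      refine Finset.sum_congr rfl fun v hv => ?_
      split_ifs with e
      · subst e; rw [hself u hu]; norm_num
      · rcases clique_vals hK hu hv e with e | e <;> rw [e] <;> norm_num
    have h6 : ∑ u ∈ K, ∑ v ∈ K, (if u = v then (6 : ℝ) else 0) = 66 := by
      rw [Finset.sum_congr rfl (g := fun _ => (6 : ℝ))]
      · simp [hc]; norm_num
      · intro u hu
        rw [Finset.sum_ite_eq]; simp [hu]
    linarith
  -- s3
  have hs3' : s3 = 6 * s2 - 176 := by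
    have key : ∀ v ∈ K, ∑ u ∈ K, ∑ w ∈ K, dot u v * dot w v * dot u w =
        2 * (∑ w ∈ K, dot v w ^ 2) + 2 * (∑ u ∈ K, dot v u ^ 2) + 2 * (∑ u ∈ K, dot v u ^ 2)
          - 16 := by
      intro v hv
      have e1 : 2 * (∑ w ∈ K, dot v w ^ 2) = ∑ u ∈ K, ∑ w ∈ K, if u = v then 2 * dot v w ^ 2 else 0 := by
        rw [Finset.sum_comm, Finset.mul_sum]
        refine Finset.sum_congr rfl fun w _ => ?_
        rw [Finset.sum_ite_eq']; simp [hv]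
      have e2 : 2 * (∑ u ∈ K, dot v u ^ 2) = ∑ u ∈ K, ∑ w ∈ K, if w = v then 2 * dot v u ^ 2 else 0 := by
        rw [Finset.mul_sum]
        refine Finset.sum_congr rfl fun w _ => ?_
        rw [Finset.sum_ite_eq']; simp [hv]
      have e3 : 2 * (∑ u ∈ K, dot v u ^ 2) = ∑ u ∈ K, ∑ w ∈ K, if u = w then 2 * dot v u ^ 2 else 0 := by
        rw [Finset.mul_sum]
        refine Finset.sum_congr rfl fun w hw => ?_
        rw [Finset.sum_ite_eq]; simp [hw]
      have e4 : (16 : ℝ) = ∑ u ∈ K, ∑ w ∈ K, if u = v then (if w = v then 16 else 0) else 0 := by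
        rw [Finset.sum_comm, Finset.sum_congr rfl (g := fun w => if w = v then (16 : ℝ) else 0)]
        · rw [Finset.sum_ite_eq']; simp [hv]
        · intro w _
          rw [Finset.sum_ite_eq']; simp [hv]
      refine Eq.trans ?_ (congrArg₂ (· - ·) (congrArg₂ (· + ·) (congrArg₂ (· + ·) e1 e2) e3) e4).symm
      rw [← Finset.sum_add_distrib, ← Finset.sum_add_distrib, ← Finset.sum_sub_distrib]
      refine Finset.sum_congr rfl fun u hu => ?_
      rw [← Finset.sum_add_distrib, ← Finset.sum_add_distrib, ← Finset.sum_sub_distrib]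
      refine Finset.sum_congr rfl fun w hw => ?_
      by_cases h1 : u = v
      · subst h1
        by_cases h2 : w = u
        · subst h2; simp [hself w hw]; norm_num
        · simp only [if_true, h2, if_false, Ne.symm h2, hself u hu, dot_comm w u]; ring
      · by_cases h2 : w = v
        · subst h2; simp only [h1, if_true, if_false, hself w hw, dot_comm w u]; ring
        · by_cases h3 : u = w
          · subst h3; simp only [h1, if_true, if_false, hself u hu, dot_comm v u]; ring
          · simp only [h1, h2, h3, if_false]
            rcases clique_vals hK hu hv h1 with a | a
            · rcases clique_vals hK hu hw h3 with b | b
              · have := hno u hu v hv w hw a b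
                rcases clique_vals hK hv hw (Ne.symm h2) with c | c
                · exact absurd c this
                · rw [dot_comm w v, c]; ring
              · rw [b]; ring
            · rw [a]; ring
    rw [hs3, Finset.sum_congr rfl key]
    simp only [Finset.sum_sub_distrib, Finset.sum_add_distrib, ← Finset.mul_sum]
    rw [← hs2]; simp [hc]; ring
  -- trace inequality
  set X : Fin 8 → V8 := fun j => (∑ u ∈ K, u j • u) - (5 / 2 : ℝ) • Pi.single j 1 with hX
  have hA : ∑ j, ∑ v ∈ K, dot (X j) v ^ 2 = s3 - 5 * s2 + 25 / 4 * 22 := by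
    rw [Finset.sum_comm]
    have : ∀ v ∈ K, ∑ j, dot (X j) v ^ 2 = (∑ u ∈ K, ∑ w ∈ K, dot u v * dot w v * dot u w)
        - 5 * (∑ u ∈ K, dot v u ^ 2) + 25 / 4 * dot v v := by
      intro v hv
      have e : ∀ j, dot (X j) v = ((∑ u ∈ K, dot u v • u) - (5 / 2 : ℝ) • v) j := by
        intro j
        rw [hX]
        simp only [dot_sub_left, dot_sum_left, dot_smul_left, Pi.sub_apply, Finset.sum_apply,
          Pi.smul_apply, smul_eq_mul]
        congr 1
        · exact Finset.sum_congr rfl fun u _ => mul_comm _ _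
        · congr 1
          show Pi.single j 1 ⬝ᵥ v = _
          rw [single_dotProduct]; ring
      have e2 : ∑ j, dot (X j) v ^ 2 = dot ((∑ u ∈ K, dot u v • u) - (5 / 2 : ℝ) • v)
          ((∑ u ∈ K, dot u v • u) - (5 / 2 : ℝ) • v) := by
        unfold dot
        refine Finset.sum_congr rfl fun j _ => ?_
        have := e j
        unfold dot at this
        rw [this]; ring
      rw [e2]
      have e3 : dot (∑ u ∈ K, dot u v • u) v = ∑ u ∈ K, dot v u ^ 2 := by
        rw [dot_sum_left]
        exact Finset.sum_congr rfl fun u _ => by rw [dot_smul_left, dot_comm u v]; ring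
      have e4 : dot (∑ u ∈ K, dot u v • u) (∑ u ∈ K, dot u v • u) =
          ∑ u ∈ K, ∑ w ∈ K, dot u v * dot w v * dot u w := by
        rw [dot_sum_left]
        refine Finset.sum_congr rfl fun u _ => ?_
        rw [dot_sum_right]
        exact Finset.sum_congr rfl fun w _ => by rw [dot_smul_left, dot_smul_right]; ring
      rw [dot_sub_left, dot_sub_right, dot_sub_right, dot_smul_left, dot_smul_left,
        dot_smul_right, dot_smul_right, dot_comm v (∑ u ∈ K, dot u v • u), e3, e4]
      ring
    rw [Finset.sum_congr rfl this, Finset.sum_add_distrib, Finset.sum_sub_distrib,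
      ← Finset.mul_sum, ← Finset.mul_sum, hdiag]
  have hB : ∑ j, dot (X j) (X j) = s2 - 5 * 22 + 25 / 4 * 8 := by
    have e0 : ∀ j, dot (X j) (X j) = (∑ u ∈ K, ∑ w ∈ K, u j * w j * dot u w)
        - 5 * (∑ u ∈ K, u j * u j) + 25 / 4 := by
      intro j
      have e1 : ∀ v : V8, dot v (Pi.single j 1) = v j := by
        intro v
        show v ⬝ᵥ Pi.single j 1 = _
        rw [dotProduct_single]; ring
      have e2 : dot (∑ u ∈ K, u j • u) (∑ u ∈ K, u j • u) = ∑ u ∈ K, ∑ w ∈ K, u j * w j * dot u w := by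
        rw [dot_sum_left]
        refine Finset.sum_congr rfl fun u _ => ?_
        rw [dot_sum_right]
        exact Finset.sum_congr rfl fun w _ => by rw [dot_smul_left, dot_smul_right]; ring
      rw [hX]
      simp only []
      rw [dot_sub_left, dot_sub_right, dot_sub_right, dot_smul_left, dot_smul_left,
        dot_smul_right, dot_smul_right, dot_comm (Pi.single j 1) (∑ u ∈ K, u j • u), e1, e1, e2]
      simp only [Finset.sum_apply, Pi.smul_apply, smul_eq_mul, Pi.single_eq_same]
      ring
    simp_rw [e0]
    rw [Finset.sum_add_distrib, Finset.sum_sub_distrib, ← Finset.mul_sum]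
    have f1 : ∑ j, ∑ u ∈ K, ∑ w ∈ K, u j * w j * dot u w = s2 := by
      rw [Finset.sum_comm]
      refine Finset.sum_congr rfl fun u _ => ?_
      rw [Finset.sum_comm]
      refine Finset.sum_congr rfl fun w _ => ?_
      rw [← Finset.sum_mul, sq]; rfl
    have f2 : ∑ j, ∑ u ∈ K, u j * u j = (22 : ℝ) := by
      rw [Finset.sum_comm, ← hdiag]; rfl
    rw [f1, f2]; simp; ring
  have hC : ∑ j, ∑ v ∈ K, dot (X j) v ^ 2 ≤ 4 * ∑ j, dot (X j) (X j) := by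
    rw [Finset.mul_sum]
    exact Finset.sum_le_sum fun j _ => op_bound K hK (X j)
  rw [hA, hB, hs3'] at hC
  linarith

theorem emb_inj : Function.Injective emb := by
  intro x y h
  have h' := fun i => congrFun h i
  have h0 := h' 0; have h1 := h' 1; have h2 := h' 2; have h3 := h' 3
  have h4 := h' 4; have h5 := h' 5; have h6 := h' 6; have h7 := h' 7
  simp only [emb, Matrix.cons_val] at h0 h1 h2 h3 h4 h5 h6 h7
  cases x; cases y
  simp only [Z8.mk.injEq]
  refine ⟨?_, ?_, ?_, ?_, ?_, ?_, ?_, ?_⟩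
  all_goals (rify; linarith)

theorem dot_emb (x y : Z8) : dot (emb x) (emb y) = (zd x y : ℝ) / 4 := by
  simp only [dot, Fin.sum_univ_eight, emb, zd, Matrix.cons_val]
  push_cast; ring

theorem dot_emb_eq (x y : Z8) (k : ℤ) : dot (emb x) (emb y) = (k : ℝ) / 4 ↔ zd x y = k := by
  rw [dot_emb]
  constructor
  · intro h; rify; linarith
  · rintro rfl; rfl

theorem dot_emb_m1 (x y : Z8) : dot (emb x) (emb y) = -1 ↔ zd x y = -4 := by
  rw [← dot_emb_eq]; norm_num
theorem dot_emb_0 (x y : Z8) : dot (emb x) (emb y) = 0 ↔ zd x y = 0 := by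
  rw [← dot_emb_eq]; norm_num
theorem dot_emb_1 (x y : Z8) : dot (emb x) (emb y) = 1 ↔ zd x y = 4 := by
  rw [← dot_emb_eq]; norm_num

theorem zd_comm (x y : Z8) : zd x y = zd y x := by unfold zd; ring

theorem lambda_iff (a : V8) : inLambda a ↔ ∃ z : Fin 8 → ℤ, (∀ i, a i = z i / 2) ∧
    (∀ i, (2 : ℤ) ∣ z i - z 0) ∧ (4 : ℤ) ∣ ∑ i, z i := by
  constructor
  · rintro ⟨h | h, m, hm⟩
    · choose n hn using h
      refine ⟨fun i => 2 * n i, fun i => by rw [hn]; push_cast; ring,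
        fun i => ⟨n i - n 0, by ring⟩, m, ?_⟩
      simp_rw [hn] at hm
      rw [← Finset.mul_sum]
      have : (∑ i, n i) = 2 * m := by exact_mod_cast hm
      rw [this]; ring
    · choose n hn using h
      refine ⟨fun i => 2 * n i + 1, fun i => by rw [hn]; push_cast; ring,
        fun i => ⟨n i - n 0, by ring⟩, m, ?_⟩
      rify
      have : ∀ i, (2 * (n i : ℝ) + 1) = 2 * a i := fun i => by rw [hn]; ring
      simp_rw [this]
      rw [← Finset.mul_sum, hm]; ring
  · rintro ⟨z, hz, hp, m, hm⟩
    refine ⟨?_, m, ?_⟩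
    · rcases Int.even_or_odd' (z 0) with ⟨k, hk | hk⟩
      · left; intro i
        obtain ⟨t, ht⟩ := hp i
        refine ⟨k + t, ?_⟩
        have : z i = 2 * (k + t) := by linarith
        rw [hz, this]; push_cast; ring
      · right; intro i
        obtain ⟨t, ht⟩ := hp i
        refine ⟨k + t, ?_⟩
        have : z i = 2 * (k + t) + 1 := by linarith
        rw [hz, this]; push_cast; ring
    · simp_rw [hz]
      rw [← Finset.sum_div]
      have : (∑ i, (z i : ℝ)) = 4 * m := by exact_mod_cast hm
      rw [this]; ring

theorem lambda_sub_smul {a b : V8} (ha : inLambda a) (hb : inLambda b) (k : ℤ) :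
    inLambda (a - (k : ℝ) • b) := by
  rw [lambda_iff] at *
  obtain ⟨z, h1, h2, h3⟩ := ha
  obtain ⟨y, g1, g2, g3⟩ := hb
  refine ⟨fun i => z i - k * y i, fun i => ?_, fun i => ?_, ?_⟩
  · simp only [Pi.sub_apply, Pi.smul_apply, smul_eq_mul, h1, g1]; push_cast; ring
  · have : z i - k * y i - (z 0 - k * y 0) = (z i - z 0) - k * (y i - y 0) := by ring
    rw [this]
    exact dvd_sub (h2 i) (Dvd.dvd.mul_left (g2 i) k)
  · rw [Finset.sum_sub_distrib, ← Finset.mul_sum]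
    exact dvd_sub h3 (Dvd.dvd.mul_left g3 k)

theorem lambda_dot {a b : V8} (ha : inLambda a) (hb : inLambda b) : ∃ k : ℤ, dot a b = k := by
  rw [lambda_iff] at *
  obtain ⟨z, h1, h2, h3⟩ := ha
  obtain ⟨y, g1, g2, g3⟩ := hb
  choose p hp using h2
  choose q hq using g2
  have hz : ∀ i, z i = z 0 + 2 * p i := fun i => by linarith [hp i]
  have hy : ∀ i, y i = y 0 + 2 * q i := fun i => by linarith [hq i]
  have e1 : ∑ i, z i = 8 * z 0 + 2 * ∑ i, p i := by
    rw [Finset.sum_congr rfl fun i _ => hz i, Finset.sum_add_distrib, ← Finset.mul_sum]; simp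
  have e2 : ∑ i, y i = 8 * y 0 + 2 * ∑ i, q i := by
    rw [Finset.sum_congr rfl fun i _ => hy i, Finset.sum_add_distrib, ← Finset.mul_sum]; simp
  have e3 : ∑ i, z i * y i = 8 * (z 0 * y 0) + 2 * z 0 * ∑ i, q i + 2 * y 0 * ∑ i, p i
      + 4 * ∑ i, p i * q i := by
    rw [Finset.mul_sum, Finset.mul_sum, Finset.mul_sum]
    have : 8 * (z 0 * y 0) = ∑ _i : Fin 8, z 0 * y 0 := by simp
    rw [this, ← Finset.sum_add_distrib, ← Finset.sum_add_distrib, ← Finset.sum_add_distrib]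
    exact Finset.sum_congr rfl fun i _ => by rw [hz i, hy i]; ring_nf
  obtain ⟨P, hP⟩ : (2 : ℤ) ∣ ∑ i, p i := by omega
  obtain ⟨Q, hQ⟩ : (2 : ℤ) ∣ ∑ i, q i := by omega
  refine ⟨2 * (z 0 * y 0) + z 0 * Q + y 0 * P + ∑ i, p i * q i, ?_⟩
  have e4 : dot a b = ((∑ i, z i * y i : ℤ) : ℝ) / 4 := by
    unfold dot; push_cast
    rw [Finset.sum_div]
    exact Finset.sum_congr rfl fun i _ => by rw [h1, g1]; ring
  rw [e4, e3, hP, hQ]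
  generalize ∑ i, p i * q i = r
  push_cast; ring

theorem isRoot_sub {f g : V8} (hf : isRoot f) (hg : isRoot g) (h : dot f g = 1) :
    isRoot (f - g) := by
  refine ⟨by simpa using lambda_sub_smul hf.1 hg.1 1, ?_⟩
  rw [dot_sub_left, dot_sub_right, dot_sub_right, dot_comm g f, hf.2, hg.2, h]; norm_num

def reflL (r : V8) : V8 →ₗ[ℝ] V8 where
  toFun x := x - dot x r • r
  map_add' x y := by rw [dot_add_left, add_smul]; abel
  map_smul' k x := by rw [dot_smul_left, mul_smul, smul_sub]; rfl

theorem reflL_apply (r x : V8) : reflL r x = x - dot x r • r := rfl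

theorem reflL_inv (r : V8) (h : dot r r = 2) : Function.Involutive (reflL r) := by
  intro x
  simp only [reflL_apply, dot_sub_left, dot_smul_left, h]
  module

def refl8 (r : V8) (h : dot r r = 2) : V8 ≃ₗ[ℝ] V8 := LinearEquiv.ofInvolutive (reflL r) (reflL_inv r h)

theorem refl8_apply (r : V8) (h : dot r r = 2) (x : V8) : refl8 r h x = x - dot x r • r := rfl

theorem refl8_weyl (r : V8) (h : isRoot r) : IsWeyl (refl8 r h.2) := by
  have hd : ∀ a b : V8, dot (refl8 r h.2 a) (refl8 r h.2 b) = dot a b := by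
    intro a b
    simp only [refl8_apply, dot_sub_left, dot_sub_right, dot_smul_left, dot_smul_right, h.2,
      dot_comm r b]
    ring
  have hr : ∀ a, isRoot a → isRoot (refl8 r h.2 a) := by
    intro a ha
    refine ⟨?_, by rw [hd]; exact ha.2⟩
    obtain ⟨k, hk⟩ := lambda_dot ha.1 h.1
    rw [refl8_apply, hk]
    exact lambda_sub_smul ha.1 h.1 k
  refine ⟨hd, Set.Subset.antisymm ?_ ?_⟩
  · rintro _ ⟨a, ha, rfl⟩; exact hr a ha
  · intro a ha
    exact ⟨refl8 r h.2 a, hr a ha, reflL_inv r h.2 a⟩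

theorem weyl_root {w : V8 ≃ₗ[ℝ] V8} (hw : IsWeyl w) {a : V8} (ha : isRoot a) : isRoot (w a) := by
  have : w a ∈ ⇑w '' {a | isRoot a} := ⟨a, ha, rfl⟩
  rw [hw.2] at this; exact this

theorem weyl_symm {w : V8 ≃ₗ[ℝ] V8} (hw : IsWeyl w) : IsWeyl w.symm := by
  refine ⟨fun a b => by rw [← hw.1]; simp, ?_⟩
  conv_lhs => rw [← hw.2]
  ext x; simp

theorem weyl_trans {w v : V8 ≃ₗ[ℝ] V8} (hw : IsWeyl w) (hv : IsWeyl v) : IsWeyl (w.trans v) := by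
  refine ⟨fun a b => by simp [hw.1, hv.1], ?_⟩
  rw [show ⇑(w.trans v) = ⇑v ∘ ⇑w from rfl, Set.image_comp, hw.2, hv.2]

theorem weyl_one : IsWeyl (LinearEquiv.refl ℝ V8) := ⟨fun a b => rfl, Set.image_id _⟩

theorem mem_zgen (S : List ℤ) : ∀ (n : ℕ) (l : List ℤ) (b : ℤ), l.length = n → (∀ x ∈ l, x ∈ S) →
    (l.map fun x => x * x).sum ≤ b → l ∈ zgen S n b := by
  intro n
  induction n with
  | zero => intro l b hl _ _; simp [zgen, List.length_eq_zero_iff.1 hl]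
  | succ n ih =>
    intro l b hl hS hb
    match l, hl with
    | x :: l, hl =>
      simp only [List.map_cons, List.sum_cons] at hb
      have hnn : 0 ≤ (l.map fun x => x * x).sum := by
        apply List.sum_nonneg
        intro y hy
        obtain ⟨z, _, rfl⟩ := List.mem_map.1 hy
        exact mul_self_nonneg z
      rw [zgen, List.mem_flatMap]
      refine ⟨x, hS x (by simp), ?_⟩
      rw [if_pos (by linarith), List.mem_map]
      exact ⟨l, ih l _ (by simpa using hl) (fun y hy => hS y (by simp [hy])) (by linarith), rfl⟩

theorem root_mem {a : V8} (ha : isRoot a) : ∃ z ∈ zroots, emb z = a := by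
  obtain ⟨hl, h2⟩ := ha
  obtain ⟨z, hz, hp, hs⟩ := (lambda_iff a).1 hl
  have hn : ∑ i, z i * z i = 8 := by
    have : dot a a = ((∑ i, z i * z i : ℤ) : ℝ) / 4 := by
      unfold dot; push_cast
      rw [Finset.sum_div]
      exact Finset.sum_congr rfl fun i _ => by rw [hz]; ring
    rw [this] at h2
    rify; push_cast at h2; linarith
  refine ⟨⟨z 0, z 1, z 2, z 3, z 4, z 5, z 6, z 7⟩, ?_, ?_⟩
  · have hn' := hn
    rw [Fin.sum_univ_eight] at hn hs
    have hb : ∀ i, z i * z i ≤ 8 := fun i => by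
      rw [← hn']
      exact Finset.single_le_sum (f := fun i => z i * z i) (fun j _ => mul_self_nonneg (z j))
        (Finset.mem_univ i)
    have hb2 : ∀ i, -2 ≤ z i ∧ z i ≤ 2 := fun i =>
      ⟨by nlinarith [hb i], by nlinarith [hb i]⟩
    unfold zroots
    rw [List.mem_filter]
    constructor
    · rw [List.mem_map]
      refine ⟨[z 0, z 1, z 2, z 3, z 4, z 5, z 6, z 7], ?_, rfl⟩
      rw [List.mem_append]
      have hsum : (([z 0, z 1, z 2, z 3, z 4, z 5, z 6, z 7] : List ℤ).map fun x => x * x).sum ≤ 8 := by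
        simp; linarith
      have hmem : ∀ S : List ℤ, (∀ i, z i ∈ S) →
          ∀ x ∈ ([z 0, z 1, z 2, z 3, z 4, z 5, z 6, z 7] : List ℤ), x ∈ S := by
        intro S h x hx
        simp only [List.mem_cons, List.not_mem_nil, or_false] at hx
        rcases hx with rfl | rfl | rfl | rfl | rfl | rfl | rfl | rfl <;> exact h _
      rcases Int.even_or_odd' (z 0) with ⟨k, hk | hk⟩
      · left
        refine mem_zgen _ _ _ _ rfl (hmem _ fun i => ?_) hsum
        have := hb2 i; have := hp i
        simp only [List.mem_cons, List.not_mem_nil, or_false]; omega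
      · right
        refine mem_zgen _ _ _ _ rfl (hmem _ fun i => ?_) hsum
        have := hb2 i; have := hp i
        simp only [List.mem_cons, List.not_mem_nil, or_false]; omega
    · rw [Bool.and_eq_true, decide_eq_true_eq, decide_eq_true_eq]
      refine ⟨hn, ?_⟩
      simp only [zsum]; omega
  · funext i
    rw [hz]
    fin_cases i <;> rfl

theorem isRoot_emb {z : Z8} (h : z ∈ zroots) : isRoot (emb z) := by
  obtain ⟨h1, h2, h3⟩ := c_refl_root z h
  refine ⟨?_, by rw [dot_emb, h1]; norm_num⟩
  rw [lambda_iff]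
  refine ⟨![z.a0, z.a1, z.a2, z.a3, z.a4, z.a5, z.a6, z.a7], ?_, ?_, ?_⟩
  · intro i; fin_cases i <;> rfl
  · intro i; fin_cases i <;> simp <;> omega
  · simp only [Fin.sum_univ_eight, Matrix.cons_val]
    unfold zsum at h2; omega

theorem zchain_pair : ∀ l : List Z8, zchain l = true → l.IsChain (fun x y => zcode x < zcode y) := by
  intro l
  induction l with
  | nil => intro _; exact .nil
  | cons x xs ih =>
    intro h
    unfold zchain at h
    rw [Bool.and_eq_true] at h
    match xs, h, ih with
    | [], _, _ => exact .singleton x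
    | y :: ys, h, ih => exact .cons_cons (by simpa using h.1) (ih h.2)

theorem zroots_nodup : zroots.Nodup := by
  have h := zchain_pair _ c_card1.2
  have : IsTrans Z8 (fun x y => zcode x < zcode y) := ⟨fun a b c h h' => lt_trans h h'⟩
  have h' := List.isChain_iff_pairwise.1 h
  exact h'.imp fun {a b} hab e => by subst e; exact lt_irrefl _ hab

theorem zcls_nodup (S : List (Z8 × ℤ)) : (zcls S).Nodup := zroots_nodup.filter _

theorem mem_zcls {S : List (Z8 × ℤ)} {f : Z8} :
    f ∈ zcls S ↔ f ∈ zroots ∧ ∀ s ∈ S, zd f s.1 = s.2 := by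
  simp [zcls, List.mem_filter]

theorem layer_sub (S : List (Z8 × ℤ)) (t : Z8) (ht : t ∈ zcls S) (n : ℕ) :
    ∀ f ∈ zlayer (zcls S) t n, f ∈ zcls S := by
  intro f hf
  cases n with
  | zero => simp [zlayer] at hf; subst hf; exact ht
  | succ n => rw [zlayer, List.mem_filter] at hf; exact hf.1

theorem layer_trans (S : List (Z8 × ℤ)) (t : Z8) (ht : t ∈ zcls S) (n : ℕ) :
    ∀ f ∈ zlayer (zcls S) t n, ∃ w : V8 ≃ₗ[ℝ] V8, IsWeyl w ∧
      (∀ s ∈ S, w (emb s.1) = emb s.1) ∧ w (emb f) = emb t := by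
  induction n with
  | zero =>
    intro f hf
    simp [zlayer] at hf; subst hf
    exact ⟨LinearEquiv.refl ℝ V8, weyl_one, fun _ _ => rfl, rfl⟩
  | succ n ih =>
    intro f hf
    rw [zlayer, List.mem_filter, List.any_eq_true] at hf
    obtain ⟨hf, g, hg, hfg⟩ := hf
    obtain ⟨w, hw, h1, h2⟩ := ih g hg
    rw [Bool.or_eq_true, decide_eq_true_eq, decide_eq_true_eq] at hfg
    rcases hfg with rfl | hfg
    · exact ⟨w, hw, h1, h2⟩
    · have hgc := mem_zcls.1 (layer_sub S t ht n g hg)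
      have hfc := mem_zcls.1 hf
      have hd := (dot_emb_1 f g).2 hfg
      have hr := isRoot_sub (isRoot_emb hfc.1) (isRoot_emb hgc.1) hd
      refine ⟨(refl8 _ hr.2).trans w, weyl_trans (refl8_weyl _ hr) hw, ?_, ?_⟩
      · intro s hs
        rw [LinearEquiv.trans_apply, refl8_apply, dot_sub_right, dot_emb, dot_emb,
          zd_comm s.1 f, zd_comm s.1 g, hfc.2 s hs, hgc.2 s hs, sub_self, zero_smul, sub_zero, h1 s hs]
      · rw [LinearEquiv.trans_apply, refl8_apply, dot_sub_right, hd, (isRoot_emb hfc.1).2, ← h2]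
        congr 1
        module

theorem trans_real (S : List (Z8 × ℤ)) (t : Z8) (ht : t ∈ zcls S)
    (hl : zlayer (zcls S) t 3 = zcls S) (a : V8) (ha : isRoot a)
    (has : ∀ s ∈ S, dot a (emb s.1) = (s.2 : ℝ) / 4) : ∃ w : V8 ≃ₗ[ℝ] V8, IsWeyl w ∧
      (∀ s ∈ S, w (emb s.1) = emb s.1) ∧ w a = emb t := by
  obtain ⟨f, hf, rfl⟩ := root_mem ha
  refine layer_trans S t ht 3 f ?_
  rw [hl, mem_zcls]
  exact ⟨hf, fun s hs => (dot_emb_eq _ _ _).1 (has s hs)⟩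

theorem zr_mem : zr1 ∈ zroots ∧ zr2 ∈ zroots ∧ zr3 ∈ zroots ∧ zr4 ∈ zroots ∧ zr5 ∈ zroots := by
  have h := (c_s7c zL0 c_s7.2.1).2.2.1
  refine ⟨h _ ?_, h _ ?_, h _ ?_, h _ ?_, h _ ?_⟩ <;> simp [zbase]

def wim (w : V8 ≃ₗ[ℝ] V8) (K : Finset V8) : Finset V8 := K.map w.toEquiv.toEmbedding

theorem mem_wim {w : V8 ≃ₗ[ℝ] V8} {K : Finset V8} {x : V8} : x ∈ wim w K ↔ ∃ a ∈ K, w a = x := by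
  rw [wim, Finset.mem_map]; rfl
theorem map_mem_wim {w : V8 ≃ₗ[ℝ] V8} {K : Finset V8} {a : V8} : w a ∈ wim w K ↔ a ∈ K := by
  rw [mem_wim]
  constructor
  · rintro ⟨b, hb, h⟩; rwa [← w.injective h]
  · intro h; exact ⟨a, h, rfl⟩
theorem card_wim (w : V8 ≃ₗ[ℝ] V8) (K : Finset V8) : (wim w K).card = K.card := Finset.card_map _
theorem coe_wim (w : V8 ≃ₗ[ℝ] V8) (K : Finset V8) : (wim w K : Set V8) = ⇑w '' (K : Set V8) := by
  ext x; simp [mem_wim]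
theorem wim_wim (w v : V8 ≃ₗ[ℝ] V8) (K : Finset V8) : wim v (wim w K) = wim (w.trans v) K := by
  ext x; simp [mem_wim]
theorem wim_symm (w : V8 ≃ₗ[ℝ] V8) (K : Finset V8) : wim w.symm (wim w K) = K := by
  ext x; simp [mem_wim]
theorem wim_symm' (w : V8 ≃ₗ[ℝ] V8) (K : Finset V8) : wim w (wim w.symm K) = K := by
  ext x; simp [mem_wim]
theorem clique_wim {w : V8 ≃ₗ[ℝ] V8} (hw : IsWeyl w) {K : Finset V8} {c : Set ℝ}
    (hK : IsClique c K) : IsClique c (wim w K) := by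
  constructor
  · intro e he
    obtain ⟨a, ha, rfl⟩ := mem_wim.1 he
    exact weyl_root hw (hK.1 a ha)
  · intro e he f hf hne
    obtain ⟨a, ha, rfl⟩ := mem_wim.1 he
    obtain ⟨b, hb, rfl⟩ := mem_wim.1 hf
    rw [hw.1]
    exact hK.2 a ha b hb fun h => hne (by rw [h])
theorem clique_sub {K L : Finset V8} {c : Set ℝ} (hK : IsClique c K) (h : L ⊆ K) : IsClique c L :=
  ⟨fun e he => hK.1 e (h he), fun e he f hf => hK.2 e (h he) f (h hf)⟩

def zfin (l : List Z8) : Finset V8 := l.toFinset.map ⟨emb, emb_inj⟩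
theorem mem_zfin {l : List Z8} {x : V8} : x ∈ zfin l ↔ ∃ z ∈ l, emb z = x := by simp [zfin]
theorem emb_mem_zfin {l : List Z8} {z : Z8} : emb z ∈ zfin l ↔ z ∈ l := by
  rw [mem_zfin]
  constructor
  · rintro ⟨y, hy, h⟩; rwa [← emb_inj h]
  · intro h; exact ⟨z, h, rfl⟩
theorem card_zfin {l : List Z8} (h : l.Nodup) : (zfin l).card = l.length := by
  rw [zfin, Finset.card_map, List.toFinset_card_of_nodup h]

theorem search_complete (R : Z8 → Z8 → Bool) : ∀ (n : ℕ) (pool l : List Z8), l.Sublist pool →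
    l.length = n → l.Pairwise (fun x y => R x y = true) → l ∈ zsearch R n pool := by
  intro n
  induction n with
  | zero => intro pool l _ hl _; simp [zsearch, List.length_eq_zero_iff.1 hl]
  | succ n ih =>
    intro pool
    induction pool with
    | nil => intro l hs hl; rw [List.sublist_nil.1 hs] at hl; simp at hl
    | cons x xs ihx =>
      intro l hs hl hp
      have hlen : n ≤ xs.length := by
        have := hs.length_le; rw [hl, List.length_cons] at this; omega
      show l ∈ zstep R n (zsearch R n) (x :: xs)
      rw [zstep, if_neg (by omega), List.mem_append]
      cases hs with
      | cons _ h => right; exact ihx l h hl hp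
      | cons_cons _ h =>
        rename_i l'
        left
        rw [List.mem_map]
        rw [List.pairwise_cons] at hp
        refine ⟨l', ih _ l' ?_ (by simpa using hl) hp.2, rfl⟩
        have : l' = l'.filter (R x) := (List.filter_eq_self.2 hp.1).symm
        rw [this]
        exact h.filter _

theorem exists_list (R : Z8 → Z8 → Bool) (pool : List Z8) (hp : pool.Nodup) (K : Finset V8)
    (hK : K ⊆ zfin pool)
    (hR : ∀ x y, emb x ∈ K → emb y ∈ K → x ≠ y → R x y = true) (n : ℕ) (hn : K.card = n) :
    ∃ l ∈ zsearch R n pool, K = zfin l := by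
  classical
  let l := pool.filter fun z => decide (emb z ∈ K)
  have hl : l.Nodup := hp.filter _
  have hKl : K = zfin l := by
    ext x
    rw [mem_zfin]
    constructor
    · intro hx
      obtain ⟨z, hz, rfl⟩ := mem_zfin.1 (hK hx)
      exact ⟨z, by simp [l, hz, hx], rfl⟩
    · rintro ⟨z, hz, rfl⟩
      simpa using (List.mem_filter.1 hz).2
  refine ⟨l, search_complete R n pool l List.filter_sublist ?_ ?_, hKl⟩
  · rw [← hn, hKl, card_zfin hl]
  · refine List.Pairwise.imp_of_mem (R := fun x y => x ≠ y) ?_ hl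
    intro a b ha hb hab
    exact hR a b (by simpa using (List.mem_filter.1 ha).2)
      (by simpa using (List.mem_filter.1 hb).2) hab

theorem tri_unique {a b c : V8} (ha : dot a a = 2) (hb : dot b b = 2) (hc : dot c c = 2)
    (hab : dot a b = -1) (hac : dot a c = -1) (hbc : dot b c = -1) : c = -a - b := by
  have : a + b + c = 0 := by
    apply dot_self_zero
    simp only [dot_add_left, dot_add_right, dot_comm b a, dot_comm c a, dot_comm c b, ha, hb, hc,
      hab, hac, hbc]
    norm_num
  linear_combination (exp := 1) this

theorem emb_r5 : emb zr5 = -emb zr1 - emb zr2 := by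
  funext i
  fin_cases i <;> simp [emb, zr1, zr2, zr5]

theorem dot_r12 : dot (emb zr1) (emb zr2) = -1 := (dot_emb_m1 _ _).2 rfl
theorem dot_r15 : dot (emb zr1) (emb zr5) = -1 := (dot_emb_m1 _ _).2 rfl
theorem dot_r25 : dot (emb zr2) (emb zr5) = -1 := (dot_emb_m1 _ _).2 rfl
theorem dot_r34 : dot (emb zr3) (emb zr4) = -1 := (dot_emb_m1 _ _).2 rfl

theorem tri_orth {K : Finset V8} (hK : IsClique {-1, 0} K) {a b c x : V8} (ha : a ∈ K) (hb : b ∈ K)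
    (hc : c ∈ K) (hx : x ∈ K) (h : c = -a - b) (xa : x ≠ a) (xb : x ≠ b) (xc : x ≠ c) :
    dot x a = 0 ∧ dot x b = 0 := by
  have e : dot x c = - dot x a - dot x b := by rw [h, dot_sub_right, dot_neg_right]
  rcases clique_vals hK hx ha xa with h1 | h1 <;> rcases clique_vals hK hx hb xb with h2 | h2 <;>
    rcases clique_vals hK hx hc xc with h3 | h3 <;> rw [h1, h2, h3] at e <;> norm_num at e
  exact ⟨h1, h2⟩

theorem clique_zok {K : Finset V8} (hK : IsClique {-1, 0} K) {x y : Z8} (hx : emb x ∈ K)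
    (hy : emb y ∈ K) (h : x ≠ y) : zok x y = true := by
  unfold zok
  rw [Bool.or_eq_true, decide_eq_true_eq, decide_eq_true_eq, ← dot_emb_0, ← dot_emb_m1]
  exact (clique_vals hK hx hy fun e => h (emb_inj e)).symm

theorem zpool_nodup : zpool.Nodup := (zcls_nodup _).filter _

theorem std_form {K : Finset V8} (hK : IsClique {-1, 0} K) (hb : zfin zbase ⊆ K) (n : ℕ)
    (hn : K.card = n + 5) : ∃ l ∈ zsearch zok n zpool, K = zfin (zbase ++ l) := by
  classical
  have hbm : ∀ z ∈ zbase, emb z ∈ K := fun z hz => hb (emb_mem_zfin.2 hz)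
  have hex : ∃ l ∈ zsearch zok n zpool, K \ zfin zbase = zfin l := by
    refine exists_list zok zpool zpool_nodup (K \ zfin zbase) ?_ ?_ n ?_
    · intro x hx
      rw [Finset.mem_sdiff] at hx
      obtain ⟨hxK, hxb⟩ := hx
      obtain ⟨z, hz, rfl⟩ := root_mem (hK.1 x hxK)
      rw [emb_mem_zfin] at hxb ⊢
      have hne : ∀ y ∈ zbase, z ≠ y := fun y hy e => hxb (e ▸ hy)
      have ho := tri_orth hK (hbm zr1 (by simp [zbase])) (hbm zr2 (by simp [zbase]))
        (hbm zr5 (by simp [zbase])) hxK emb_r5 (fun e => hne zr1 (by simp [zbase]) (emb_inj e))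
        (fun e => hne zr2 (by simp [zbase]) (emb_inj e))
        (fun e => hne zr5 (by simp [zbase]) (emb_inj e))
      rw [zpool, List.mem_filter, mem_zcls, Bool.and_eq_true]
      refine ⟨⟨hz, ?_⟩, ?_, ?_⟩
      · intro s hs
        simp only [List.mem_cons, List.not_mem_nil, or_false] at hs
        rcases hs with rfl | rfl
        · exact (dot_emb_0 _ _).1 ho.1
        · exact (dot_emb_0 _ _).1 ho.2
      · exact clique_zok hK (hbm zr3 (by simp [zbase])) hxK (hne zr3 (by simp [zbase])).symm
      · exact clique_zok hK (hbm zr4 (by simp [zbase])) hxK (hne zr4 (by simp [zbase])).symm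
    · intro x y hx hy h
      exact clique_zok hK (Finset.mem_sdiff.1 hx).1 (Finset.mem_sdiff.1 hy).1 h
    · rw [Finset.card_sdiff_of_subset hb, card_zfin (by decide), hn]
      simp [zbase]
  obtain ⟨l, hl, h⟩ := hex
  refine ⟨l, hl, ?_⟩
  rw [← Finset.union_sdiff_of_subset hb, h]
  ext x
  simp only [Finset.mem_union, mem_zfin, List.mem_append, or_and_right, exists_or]

theorem move_edge {K : Finset V8} (hK : IsClique {-1, 0} K) (hb : zfin [zr1, zr2, zr5] ⊆ K)
    (hn : 11 ≤ K.card) : ∃ w : V8 ≃ₗ[ℝ] V8, IsWeyl w ∧ zfin zbase ⊆ wim w K := by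
  classical
  obtain ⟨m1, m2, m3, m4, m5⟩ := zr_mem
  have h1 : emb zr1 ∈ K := hb (emb_mem_zfin.2 (by simp))
  have h2 : emb zr2 ∈ K := hb (emb_mem_zfin.2 (by simp))
  have h5 : emb zr5 ∈ K := hb (emb_mem_zfin.2 (by simp))
  set L := K \ zfin [zr1, zr2, zr5] with hL
  have hLK : L ⊆ K := Finset.sdiff_subset
  have hLc : 8 ≤ L.card := by
    rw [hL, Finset.card_sdiff_of_subset hb, card_zfin (by decide)]; simp; omega
  have ho : ∀ x ∈ L, dot x (emb zr1) = 0 ∧ dot x (emb zr2) = 0 := by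
    intro x hx
    rw [hL, Finset.mem_sdiff, mem_zfin] at hx
    obtain ⟨hxK, hx⟩ := hx
    exact tri_orth hK h1 h2 h5 hxK emb_r5 (fun e => hx ⟨zr1, by simp, e.symm⟩)
      (fun e => hx ⟨zr2, by simp, e.symm⟩) (fun e => hx ⟨zr5, by simp, e.symm⟩)
  have hmove : ∀ c ∈ L, ∃ w : V8 ≃ₗ[ℝ] V8, IsWeyl w ∧ w (emb zr1) = emb zr1 ∧
      w (emb zr2) = emb zr2 ∧ w c = emb zr3 := by
    intro c hc
    obtain ⟨w, hw, hf, ht⟩ := trans_real [(zr1, 0), (zr2, 0)] zr3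
      (mem_zcls.2 ⟨m3, by decide⟩) c_layer3 c (hK.1 c (hLK hc)) (by
        intro s hs
        simp only [List.mem_cons, List.not_mem_nil, or_false] at hs
        rcases hs with rfl | rfl
        · simpa using (ho c hc).1
        · simpa using (ho c hc).2)
    exact ⟨w, hw, hf (zr1, 0) (by simp), hf (zr2, 0) (by simp), ht⟩
  by_cases hE : ∃ c ∈ L, ∃ d ∈ L, dot d c = -1
  · obtain ⟨c, hc, d, hd, hdc⟩ := hE
    obtain ⟨w, hw, w1, w2, w3⟩ := hmove c hc
    obtain ⟨v, hv, hf, ht⟩ := trans_real [(zr1, 0), (zr2, 0), (zr3, -4)] zr4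
      (mem_zcls.2 ⟨m4, by decide⟩) c_layer4 (w d) (weyl_root hw (hK.1 d (hLK hd))) (by
        intro s hs
        simp only [List.mem_cons, List.not_mem_nil, or_false] at hs
        rcases hs with rfl | rfl | rfl
        · simp only []; rw [← w1, hw.1, (ho d hd).1]; norm_num
        · simp only []; rw [← w2, hw.1, (ho d hd).2]; norm_num
        · simp only []; rw [← w3, hw.1, hdc]; norm_num)
    have v1 := hf (zr1, 0) (by simp)
    have v2 := hf (zr2, 0) (by simp)
    have v3 := hf (zr3, -4) (by simp)
    simp only [] at v1 v2 v3
    refine ⟨w.trans v, weyl_trans hw hv, ?_⟩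
    intro x hx
    obtain ⟨z, hz, rfl⟩ := mem_zfin.1 hx
    rw [mem_wim]
    simp only [zbase, List.mem_cons, List.not_mem_nil, or_false] at hz
    rcases hz with rfl | rfl | rfl | rfl | rfl
    · exact ⟨_, h1, by rw [LinearEquiv.trans_apply, w1, v1]⟩
    · exact ⟨_, h2, by rw [LinearEquiv.trans_apply, w2, v2]⟩
    · exact ⟨_, h5, by rw [LinearEquiv.trans_apply, emb_r5, map_sub, map_neg, map_sub, map_neg, w1, w2, v1, v2]⟩
    · exact ⟨c, hLK hc, by rw [LinearEquiv.trans_apply, w3, v3]⟩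
    · exact ⟨d, hLK hd, by rw [LinearEquiv.trans_apply, ht]⟩
  · exfalso
    push Not at hE
    have horth : ∀ c ∈ L, ∀ d ∈ L, c ≠ d → dot c d = 0 := by
      intro c hc d hd hne
      rcases clique_vals hK (hLK hc) (hLK hd) hne with h | h
      · exact absurd h (hE d hd c hc)
      · exact h
    obtain ⟨c, hc⟩ : L.Nonempty := Finset.card_pos.1 (by omega)
    obtain ⟨w, hw, w1, w2, w3⟩ := hmove c hc
    obtain ⟨M, hM, hMc⟩ := Finset.exists_subset_card_eq (s := L.erase c) (n := 7)
      (by rw [Finset.card_erase_of_mem hc]; omega)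
    have hML : ∀ x ∈ M, x ∈ L ∧ x ≠ c := fun x hx =>
      ⟨Finset.mem_of_mem_erase (hM hx), Finset.ne_of_mem_erase (hM hx)⟩
    obtain ⟨l, hl, _⟩ := exists_list zorth zpool0 (zcls_nodup _) (wim w M) (by
      intro x hx
      obtain ⟨a, ha, rfl⟩ := mem_wim.1 hx
      obtain ⟨haL, hac⟩ := hML a ha
      have hr := weyl_root hw (hK.1 a (hLK haL))
      obtain ⟨z, hz, hza⟩ := root_mem hr
      rw [← hza, emb_mem_zfin]
      refine mem_zcls.2 ⟨hz, ?_⟩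
      intro s hs
      simp only [List.mem_cons, List.not_mem_nil, or_false] at hs
      rcases hs with rfl | rfl | rfl
      · simp only []; rw [← dot_emb_0, hza, ← w1, hw.1, (ho a haL).1]
      · simp only []; rw [← dot_emb_0, hza, ← w2, hw.1, (ho a haL).2]
      · simp only []; rw [← dot_emb_0, hza, ← w3, hw.1, horth a haL c hc hac]) (by
      intro x y hx hy hne
      obtain ⟨a, ha, hxa⟩ := mem_wim.1 hx
      obtain ⟨b, hb, hyb⟩ := mem_wim.1 hy
      unfold zorth
      rw [decide_eq_true_eq, ← dot_emb_0, ← hxa, ← hyb, hw.1]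
      refine horth a (hML a ha).1 b (hML b hb).1 ?_
      rintro rfl
      exact hne (emb_inj (hxa.symm.trans hyb))) 7 (by rw [card_wim, hMc])
    rw [c_orth] at hl
    simp at hl

theorem move_tri {K : Finset V8} (hK : IsClique {-1, 0} K) (hn : 11 ≤ K.card) :
    ∃ w : V8 ≃ₗ[ℝ] V8, IsWeyl w ∧ zfin [zr1, zr2, zr5] ⊆ wim w K := by
  obtain ⟨m1, m2, m3, m4, m5⟩ := zr_mem
  obtain ⟨M, hM, hMc⟩ := Finset.exists_subset_card_eq hn
  obtain ⟨a, ha, b, hb, c, hc, hab, hac, hbc⟩ := exists_tri M (clique_sub hK hM) hMc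
  have ra := hK.1 a (hM ha)
  have rb := hK.1 b (hM hb)
  have rc := hK.1 c (hM hc)
  have hcab := tri_unique ra.2 rb.2 rc.2 hab hac hbc
  obtain ⟨w, hw, _, hwt⟩ := trans_real [] zr1 (mem_zcls.2 ⟨m1, by simp⟩) c_layer1 a ra (by simp)
  obtain ⟨v, hv, hvf, hvt⟩ := trans_real [(zr1, -4)] zr2 (mem_zcls.2 ⟨m2, by decide⟩) c_layer2
    (w b) (weyl_root hw rb) (by
      intro s hs
      rw [List.mem_singleton] at hs
      subst hs
      simp only []; rw [← hwt, hw.1, dot_comm, hab]; norm_num)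
  have v1 := hvf (zr1, -4) (by simp)
  simp only [] at v1
  refine ⟨w.trans v, weyl_trans hw hv, ?_⟩
  intro x hx
  obtain ⟨z, hz, rfl⟩ := mem_zfin.1 hx
  rw [mem_wim]
  simp only [List.mem_cons, List.not_mem_nil, or_false] at hz
  rcases hz with rfl | rfl | rfl
  · exact ⟨a, hM ha, by rw [LinearEquiv.trans_apply, hwt, v1]⟩
  · exact ⟨b, hM hb, by rw [LinearEquiv.trans_apply, hvt]⟩
  · exact ⟨c, hM hc, by
      rw [LinearEquiv.trans_apply, emb_r5, hcab, map_sub, map_neg, map_sub, map_neg, hwt, v1, hvt]⟩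

theorem move_all {K : Finset V8} (hK : IsClique {-1, 0} K) (hn : 11 ≤ K.card) :
    ∃ w : V8 ≃ₗ[ℝ] V8, IsWeyl w ∧ zfin zbase ⊆ wim w K := by
  obtain ⟨w, hw, h⟩ := move_tri hK hn
  obtain ⟨v, hv, h'⟩ := move_edge (clique_wim hw hK) h (by rwa [card_wim])
  exact ⟨w.trans v, weyl_trans hw hv, by rwa [← wim_wim]⟩

theorem clique_std {l : List Z8} (hl : l ∈ zsearch zok 7 zpool) :
    IsClique {-1, 0} (zfin (zbase ++ l)) ∧ (zfin (zbase ++ l)).card = 12 := by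
  obtain ⟨h1, h2, h3, h4⟩ := c_s7c l hl
  refine ⟨⟨?_, ?_⟩, by rw [card_zfin h1, h2]⟩
  · intro e he
    obtain ⟨z, hz, rfl⟩ := mem_zfin.1 he
    exact isRoot_emb (h3 z hz)
  · intro e he f hf hne
    obtain ⟨z, hz, rfl⟩ := mem_zfin.1 he
    obtain ⟨y, hy, rfl⟩ := mem_zfin.1 hf
    rcases h4 z hz y hy with h | h
    · exact absurd (congrArg emb h) hne
    · unfold zok at h
      rw [Bool.or_eq_true, decide_eq_true_eq, decide_eq_true_eq, ← dot_emb_0, ← dot_emb_m1] at h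
      simpa using h.symm

theorem main_bound {K : Finset V8} (hK : IsClique {-1, 0} K) : K.card ≤ 12 := by
  by_contra hn
  push Not at hn
  obtain ⟨M, hM, hMc⟩ := Finset.exists_subset_card_eq (s := K) (n := 13) (by omega)
  have hMK := clique_sub hK hM
  obtain ⟨w, hw, h⟩ := move_all hMK (by omega)
  obtain ⟨l, hl, _⟩ := std_form (clique_wim hw hMK) h 8 (by rw [card_wim, hMc])
  rw [c_s8] at hl
  simp at hl

theorem main_eleven {K : Finset V8} (hK : IsMaxClique {-1, 0} K) : K.card ≠ 11 := by
  classical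
  intro hn
  obtain ⟨w, hw, h⟩ := move_all hK.1 (by omega)
  have hC := clique_wim hw hK.1
  obtain ⟨l, hl, hl'⟩ := std_form hC h 6 (by rw [card_wim, hn])
  obtain ⟨x, hx, hxl, hxo⟩ := c_s6 l hl
  rw [zpool, List.mem_filter, mem_zcls, Bool.and_eq_true] at hx
  obtain ⟨⟨hxr, hxs⟩, hx3, hx4⟩ := hx
  have hx1 : zd x zr1 = 0 := hxs (zr1, 0) (by simp)
  have hx2 : zd x zr2 = 0 := hxs (zr2, 0) (by simp)
  have hx5 : dot (emb x) (emb zr5) = 0 := by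
    rw [emb_r5, dot_sub_right, dot_neg_right, (dot_emb_0 _ _).2 hx1, (dot_emb_0 _ _).2 hx2]; norm_num
  have hself : zd x x = 8 := (c_refl_root x hxr).1
  have hok : ∀ y ∈ zbase ++ l, zok x y = true := by
    intro y hy
    rw [List.mem_append] at hy
    rcases hy with hy | hy
    · simp only [zbase, List.mem_cons, List.not_mem_nil, or_false] at hy
      rcases hy with rfl | rfl | rfl | rfl | rfl
      · simp [zok, hx1]
      · simp [zok, hx2]
      · simp [zok, (dot_emb_0 _ _).1 hx5]
      · rw [zok, zd_comm]; exact hx3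
      · rw [zok, zd_comm]; exact hx4
    · exact hxo y hy
  have hxK : emb x ∉ wim w K := by
    rw [hl', emb_mem_zfin]
    intro hm
    have := hok x hm
    rw [zok, hself] at this
    simp at this
  have hval : ∀ f ∈ wim w K, dot (emb x) f ∈ ({-1, 0} : Set ℝ) := by
    intro f hf
    rw [hl'] at hf
    obtain ⟨y, hy, rfl⟩ := mem_zfin.1 hf
    have h := hok y hy
    rw [zok, Bool.or_eq_true, decide_eq_true_eq, decide_eq_true_eq, ← dot_emb_0, ← dot_emb_m1] at h
    simpa using h.symm
  have hbig : IsClique {-1, 0} (insert (emb x) (wim w K)) := by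
    constructor
    · intro e he
      rw [Finset.mem_insert] at he
      rcases he with rfl | he
      · exact isRoot_emb hxr
      · exact hC.1 e he
    · intro e he f hf hne
      rw [Finset.mem_insert] at he hf
      rcases he with rfl | he <;> rcases hf with rfl | hf
      · exact absurd rfl hne
      · exact hval f hf
      · rw [dot_comm]; exact hval e he
      · exact hC.2 e he f hf hne
  have hb2 := clique_wim (weyl_symm hw) hbig
  have := hK.2 _ hb2 (by
    intro a ha
    rw [mem_wim]
    exact ⟨w a, Finset.mem_insert_of_mem (map_mem_wim.2 ha), by simp⟩)
  have hc := congrArg Finset.card this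
  rw [card_wim, Finset.card_insert_of_notMem hxK, card_wim] at hc
  omega

theorem emb_zrefl {p x : Z8} (hp : dot (emb p) (emb p) = 2) (h : zd x p % 4 = 0) :
    emb (zrefl p x) = refl8 (emb p) hp (emb x) := by
  rw [refl8_apply, dot_emb]
  obtain ⟨k, hk⟩ : ∃ k, zd x p = 4 * k := ⟨zd x p / 4, by omega⟩
  funext i
  simp only [zrefl, hk]
  fin_cases i <;> simp [emb] <;> ring

theorem flip_weyl : ∀ fs ∈ zflips, ∃ w : V8 ≃ₗ[ℝ] V8, IsWeyl w ∧
    ∀ x ∈ zroots, w (emb x) = emb (fs.foldr zrefl x) := by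
  obtain ⟨hp, hq, hm⟩ := c_root
  have rp := isRoot_emb hp
  have rq := isRoot_emb hq
  intro fs hfs
  have hqx : ∀ x ∈ zroots, zrefl zq x ∈ zroots := by
    intro x hx
    obtain ⟨z, hz, h⟩ := root_mem (weyl_root (refl8_weyl _ rq) (isRoot_emb hx))
    rw [← emb_zrefl rq.2 (hm x hx zq (by simp))] at h
    rw [← emb_inj h]; exact hz
  simp only [zflips, List.mem_cons, List.not_mem_nil, or_false] at hfs
  rcases hfs with rfl | rfl | rfl | rfl
  · exact ⟨LinearEquiv.refl ℝ V8, weyl_one, fun _ _ => rfl⟩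
  · exact ⟨refl8 _ rp.2, refl8_weyl _ rp, fun x hx =>
      (emb_zrefl rp.2 (hm x hx zp (by simp))).symm⟩
  · exact ⟨refl8 _ rq.2, refl8_weyl _ rq, fun x hx =>
      (emb_zrefl rq.2 (hm x hx zq (by simp))).symm⟩
  · refine ⟨(refl8 _ rq.2).trans (refl8 _ rp.2), weyl_trans (refl8_weyl _ rq) (refl8_weyl _ rp),
      fun x hx => ?_⟩
    rw [LinearEquiv.trans_apply, ← emb_zrefl rq.2 (hm x hx zq (by simp)),
      ← emb_zrefl rp.2 (hm _ (hqx x hx) zp (by simp))]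
    rfl

theorem to_K0 {K : Finset V8} (hK : IsClique {-1, 0} K) (hc : K.card = 12) :
    ∃ w : V8 ≃ₗ[ℝ] V8, IsWeyl w ∧ wim w K = zfin zK0 := by
  obtain ⟨w, hw, h⟩ := move_all hK (by omega)
  obtain ⟨l, hl, hl'⟩ := std_form (clique_wim hw hK) h 7 (by rw [card_wim, hc])
  obtain ⟨fs, hfs, hf⟩ := c_flip l hl
  obtain ⟨v, hv, hvf⟩ := flip_weyl fs hfs
  refine ⟨w.trans v, weyl_trans hw hv, ?_⟩
  rw [← wim_wim]
  apply Finset.eq_of_subset_of_card_le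
  · intro x hx
    obtain ⟨a, ha, rfl⟩ := mem_wim.1 hx
    rw [hl'] at ha
    obtain ⟨z, hz, rfl⟩ := mem_zfin.1 ha
    rw [hvf z ((c_s7c l hl).2.2.1 z hz), emb_mem_zfin]
    exact hf z hz
  · rw [card_wim, card_wim, hc]
    exact (clique_std c_s7.2.1).2.le

theorem main_trans {K L : Finset V8} (hK : IsClique {-1, 0} K) (hc : K.card = 12)
    (hL : IsClique {-1, 0} L) (hd : L.card = 12) : ∃ w : V8 ≃ₗ[ℝ] V8, IsWeyl w ∧ wim w K = L := by
  obtain ⟨w, hw, h⟩ := to_K0 hK hc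
  obtain ⟨v, hv, h'⟩ := to_K0 hL hd
  refine ⟨w.trans v.symm, weyl_trans hw (weyl_symm hv), ?_⟩
  rw [← wim_wim, h, ← h', wim_symm]

def FX (B : List Z8) : Finset (Finset V8) :=
  @Finset.filter _ (fun K => (IsClique {-1, 0} K ∧ K.card = 12) ∧ ∀ b ∈ B, emb b ∈ K)
    (Classical.decPred _) (zfin zroots).powerset

theorem mem_FX {B : List Z8} {K : Finset V8} : K ∈ FX B ↔
    (IsClique {-1, 0} K ∧ K.card = 12) ∧ ∀ b ∈ B, emb b ∈ K := by
  rw [FX, @Finset.mem_filter _ _ (Classical.decPred _), Finset.mem_powerset]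
  refine ⟨fun h => h.2, fun h => ⟨fun x hx => ?_, h⟩⟩
  exact mem_zfin.2 (root_mem (h.1.1.1 x hx))

open Classical in
theorem count_step (S : List (Z8 × ℤ)) (t : Z8) (k : ℕ) (ht : t ∈ zcls S)
    (hl : zlayer (zcls S) t 3 = zcls S)
    (hk : ∀ K ∈ FX (S.map Prod.fst), (K.filter fun x => x ∈ zfin (zcls S)).card = k) :
    (FX (S.map Prod.fst)).card * k = (zcls S).length * (FX (t :: S.map Prod.fst)).card := by
  have h := Finset.sum_card_bipartiteAbove_eq_sum_card_bipartiteBelow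
    (s := FX (S.map Prod.fst)) (t := zfin (zcls S)) (fun K x => x ∈ K)
  have h1 : ∀ K ∈ FX (S.map Prod.fst),
      ((zfin (zcls S)).bipartiteAbove (fun K x => x ∈ K) K).card = k := by
    intro K hK
    rw [← hk K hK]
    refine congrArg Finset.card (Finset.ext fun x => ?_)
    simp only [Finset.mem_bipartiteAbove, Finset.mem_filter, and_comm]
  have h2 : ∀ x ∈ zfin (zcls S),
      ((FX (S.map Prod.fst)).bipartiteBelow (fun K x => x ∈ K) x).card
        = (FX (t :: S.map Prod.fst)).card := by
    intro x hx
    obtain ⟨f, hf, rfl⟩ := mem_zfin.1 hx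
    obtain ⟨w, hw, hwf, hwt⟩ := layer_trans S t ht 3 f (by rw [hl]; exact hf)
    have hws : ∀ s ∈ S, w.symm (emb s.1) = emb s.1 := fun s hs => by
      rw [LinearEquiv.symm_apply_eq, hwf s hs]
    refine Finset.card_nbij' (wim w) (wim w.symm) ?_ ?_ ?_ ?_
    · intro K hK
      rw [Finset.mem_coe, Finset.mem_bipartiteBelow, mem_FX] at hK
      rw [Finset.mem_coe, mem_FX, card_wim]
      refine ⟨⟨clique_wim hw hK.1.1.1, hK.1.1.2⟩, ?_⟩
      intro b hb
      rw [List.mem_cons] at hb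
      rcases hb with rfl | hb
      · rw [← hwt, map_mem_wim]; exact hK.2
      · obtain ⟨s, hs, rfl⟩ := List.mem_map.1 hb
        rw [← hwf s hs, map_mem_wim]; exact hK.1.2 _ hb
    · intro K hK
      rw [Finset.mem_coe, mem_FX] at hK
      rw [Finset.mem_coe, Finset.mem_bipartiteBelow, mem_FX, card_wim]
      refine ⟨⟨⟨clique_wim (weyl_symm hw) hK.1.1, hK.1.2⟩, ?_⟩, ?_⟩
      · intro b hb
        obtain ⟨s, hs, rfl⟩ := List.mem_map.1 hb
        rw [← hws s hs, map_mem_wim]; exact hK.2 _ (by simp [hb])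
      · have : emb f = w.symm (emb t) := by rw [← hwt]; simp
        rw [this, map_mem_wim]; exact hK.2 _ (by simp)
    · intro K _; exact wim_symm w K
    · intro K _; exact wim_symm' w K
  rw [Finset.sum_congr rfl h1, Finset.sum_congr rfl h2] at h
  simpa [card_zfin (zcls_nodup S)] using h

open Classical in
theorem hk_gen (S : List (Z8 × ℤ)) (k : ℕ)
    (h : ∀ g : Z8 → Z8, (∀ s ∈ S, g s.1 ∈ zK0) →
      (∀ s ∈ S, ∀ s' ∈ S, zd (g s.1) (g s'.1) = zd s.1 s'.1) →
      (zK0.filter fun f => S.all fun s => decide (zd f (g s.1) = s.2)).length = k) :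
    ∀ K ∈ FX (S.map Prod.fst), (K.filter fun x => x ∈ zfin (zcls S)).card = k := by
  intro K hK
  rw [mem_FX] at hK
  obtain ⟨w, hw, hwK⟩ := to_K0 hK.1.1 hK.1.2
  have hex : ∀ s : Z8, ∃ a : Z8, emb s ∈ K → a ∈ zK0 ∧ w (emb s) = emb a := by
    intro s
    by_cases hs : emb s ∈ K
    · have : w (emb s) ∈ zfin zK0 := by rw [← hwK]; exact map_mem_wim.2 hs
      obtain ⟨a, ha, ha'⟩ := mem_zfin.1 this
      exact ⟨a, fun _ => ⟨ha, ha'.symm⟩⟩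
    · exact ⟨s, fun h => absurd h hs⟩
  choose g hg using hex
  have hSK : ∀ s ∈ S, emb s.1 ∈ K := fun s hs => hK.2 _ (List.mem_map_of_mem hs)
  have key := h g (fun s hs => (hg s.1 (hSK s hs)).1) (by
    intro s hs s' hs'
    have e := hw.1 (emb s.1) (emb s'.1)
    rw [(hg s.1 (hSK s hs)).2, (hg s'.1 (hSK s' hs')).2, dot_emb s.1] at e
    exact (dot_emb_eq _ _ _).1 e)
  have hnd : zK0.Nodup := (c_s7c zL0 c_s7.2.1).1
  rw [← key, ← card_zfin (hnd.filter _), ← card_wim w]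
  congr 1
  ext x
  rw [mem_wim, mem_zfin]
  constructor
  · rintro ⟨a, ha, rfl⟩
    rw [Finset.mem_filter] at ha
    obtain ⟨haK, ha⟩ := ha
    obtain ⟨z, hz, rfl⟩ := mem_zfin.1 ha
    have := hg z haK
    refine ⟨g z, ?_, this.2.symm⟩
    rw [List.mem_filter, List.all_eq_true]
    refine ⟨this.1, fun s hs => ?_⟩
    rw [decide_eq_true_eq, ← (mem_zcls.1 hz).2 s hs, ← dot_emb_eq, ← this.2,
      ← (hg s.1 (hSK s hs)).2, hw.1, dot_emb]
  · rintro ⟨z, hz, rfl⟩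
    rw [List.mem_filter, List.all_eq_true] at hz
    have : emb z ∈ wim w K := by rw [hwK]; exact emb_mem_zfin.2 hz.1
    obtain ⟨a, ha, hwa⟩ := mem_wim.1 this
    refine ⟨a, ?_, hwa⟩
    rw [Finset.mem_filter]
    refine ⟨ha, ?_⟩
    obtain ⟨y, hy, rfl⟩ := root_mem (hK.1.1.1 a ha)
    rw [emb_mem_zfin, mem_zcls]
    refine ⟨hy, fun s hs => ?_⟩
    have e := hz.2 s hs
    rw [decide_eq_true_eq] at e
    rw [← dot_emb_eq, ← hw.1, hwa, (hg s.1 (hSK s hs)).2, dot_emb, e]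

theorem FX_base : FX [zr1, zr2, zr3, zr4] =
    (zsearch zok 7 zpool).toFinset.image fun l => zfin (zbase ++ l) := by
  classical
  ext K
  rw [Finset.mem_image, mem_FX]
  constructor
  · rintro ⟨⟨hK, hc⟩, hb⟩
    have h5 : emb zr5 ∈ K := by
      obtain ⟨w, hw, hwK⟩ := to_K0 hK hc
      have h1 : w (emb zr1) ∈ zfin zK0 := by rw [← hwK]; exact map_mem_wim.2 (hb _ (by simp))
      have h2 : w (emb zr2) ∈ zfin zK0 := by rw [← hwK]; exact map_mem_wim.2 (hb _ (by simp))
      obtain ⟨a, ha, ha'⟩ := mem_zfin.1 h1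
      obtain ⟨b, hb, hb'⟩ := mem_zfin.1 h2
      have e : dot (emb a) (emb b) = -1 := by rw [ha', hb', hw.1, dot_r12]
      obtain ⟨c, hc, hac, hbc⟩ := c_tri a ha b hb ((dot_emb_m1 _ _).1 e)
      have hc' : emb c ∈ wim w K := by rw [hwK]; exact emb_mem_zfin.2 hc
      obtain ⟨d, hd, hd'⟩ := mem_wim.1 hc'
      rw [← dot_emb_m1, ha', ← hd', hw.1] at hac
      rw [← dot_emb_m1, hb', ← hd', hw.1] at hbc
      have := tri_unique (isRoot_emb zr_mem.1).2 (isRoot_emb zr_mem.2.1).2 (hK.1 d hd).2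
        dot_r12 hac hbc
      rw [emb_r5, ← this]; exact hd
    obtain ⟨l, hl, hl'⟩ := std_form hK (by
      intro x hx
      obtain ⟨z, hz, rfl⟩ := mem_zfin.1 hx
      simp only [zbase, List.mem_cons, List.not_mem_nil, or_false] at hz
      rcases hz with rfl | rfl | rfl | rfl | rfl
      · exact hb _ (by simp)
      · exact hb _ (by simp)
      · exact h5
      · exact hb _ (by simp)
      · exact hb _ (by simp)) 7 hc
    exact ⟨l, by simpa using hl, hl'.symm⟩
  · rintro ⟨l, hl, rfl⟩
    refine ⟨clique_std (by simpa using hl), ?_⟩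
    intro b hb
    rw [emb_mem_zfin, List.mem_append]
    left
    simp only [List.mem_cons, List.not_mem_nil, or_false] at hb
    rcases hb with rfl | rfl | rfl | rfl <;> simp [zbase]

theorem FX_base_card : (FX [zr1, zr2, zr3, zr4]).card = 4 := by
  classical
  obtain ⟨h1, _, h3, h4⟩ := c_s7
  rw [FX_base, Finset.card_image_of_injOn, List.toFinset_card_of_nodup h4, h1]
  intro l hl l' hl' e
  by_contra hne
  obtain ⟨x, hx, hx'⟩ := h3 l (by simpa using hl) l' (by simpa using hl') hne
  apply hx'
  rw [← emb_mem_zfin]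
  have e' : zfin (zbase ++ l) = zfin (zbase ++ l') := e
  rw [← e', emb_mem_zfin]
  simp [hx]

theorem FX_congr {B B' : List Z8} (h : ∀ b, b ∈ B ↔ b ∈ B') : FX B = FX B' := by
  ext K
  simp only [mem_FX, h]

theorem perm3 (x y z b : Z8) : b ∈ [z, x, y] ↔ b ∈ [x, y, z] := by
  simp only [List.mem_cons, List.not_mem_nil, or_false]; tauto

theorem perm4 (x y z t b : Z8) : b ∈ [t, x, y, z] ↔ b ∈ [x, y, z, t] := by
  simp only [List.mem_cons, List.not_mem_nil, or_false]; tauto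

theorem FX_card : (FX []).card = 179200 := by
  obtain ⟨m1, m2, m3, m4, m5⟩ := zr_mem
  have s1 := count_step [] zr1 12 (mem_zcls.2 ⟨m1, by simp⟩) c_layer1
    (hk_gen [] 12 (by intro g _ _; rfl))
  have s2 := count_step [(zr1, -4)] zr2 2 (mem_zcls.2 ⟨m2, by decide⟩) c_layer2
    (hk_gen _ 2 (by
      intro g hg _
      have := c_k2 (g zr1) (hg (zr1, -4) (by simp))
      simpa using this))
  have s3 := count_step [(zr1, 0), (zr2, 0)] zr3 9 (mem_zcls.2 ⟨m3, by decide⟩) c_layer3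
    (hk_gen _ 9 (by
      intro g hg hd
      have := c_k3 (g zr1) (hg (zr1, 0) (by simp)) (g zr2) (hg (zr2, 0) (by simp))
        ((hd (zr1, 0) (by simp) (zr2, 0) (by simp)).trans rfl)
      simpa using this))
  have s4 := count_step [(zr1, 0), (zr2, 0), (zr3, -4)] zr4 2 (mem_zcls.2 ⟨m4, by decide⟩) c_layer4
    (hk_gen _ 2 (by
      intro g hg hd
      have := c_k4 (g zr1) (hg (zr1, 0) (by simp)) (g zr2) (hg (zr2, 0) (by simp))
        ((hd (zr1, 0) (by simp) (zr2, 0) (by simp)).trans rfl)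
        (g zr3) (hg (zr3, -4) (by simp))
        ((hd (zr3, -4) (by simp) (zr1, 0) (by simp)).trans rfl)
        ((hd (zr3, -4) (by simp) (zr2, 0) (by simp)).trans rfl)
      simpa [Bool.and_assoc] using this))
  rw [c_card1.1] at s1
  rw [c_card2] at s2
  rw [c_card3] at s3
  rw [c_card4] at s4
  simp only [List.map_cons, List.map_nil] at s1 s2 s3 s4
  rw [FX_congr (B := [zr2, zr1]) (B' := [zr1, zr2]) (by intro b; simp [or_comm])] at s2
  rw [FX_congr (B := [zr3, zr1, zr2]) (B' := [zr1, zr2, zr3]) (perm3 _ _ _)] at s3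
  rw [FX_congr (B := [zr4, zr1, zr2, zr3]) (B' := [zr1, zr2, zr3, zr4]) (perm4 _ _ _ _),
    FX_base_card] at s4
  omega

/-- The maximal size of a clique in `Γ_{-1,0}` is twelve (it is
attained and never exceeded), there are no maximal cliques of size eleven, there
are exactly 179200 cliques of size twelve, and the Weyl group acts transitively on
the cliques of size twelve in `Γ_{-1,0}`. -/
theorem stmt_18 :
    (∀ K : Finset (Fin 8 → ℝ), IsClique {-1, 0} K → K.card ≤ 12) ∧
    (∃ K : Finset (Fin 8 → ℝ), IsClique {-1, 0} K ∧ K.card = 12) ∧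
    (∀ K : Finset (Fin 8 → ℝ), IsMaxClique {-1, 0} K → K.card ≠ 11) ∧
    ({K : Finset (Fin 8 → ℝ) | IsClique {-1, 0} K ∧ K.card = 12}.ncard = 179200) ∧
    (∀ K1 K2 : Finset (Fin 8 → ℝ),
      IsClique {-1, 0} K1 → K1.card = 12 → IsClique {-1, 0} K2 → K2.card = 12 →
      ∃ w : (Fin 8 → ℝ) ≃ₗ[ℝ] (Fin 8 → ℝ), IsWeyl w ∧
        ⇑w '' (K1 : Set (Fin 8 → ℝ)) = (K2 : Set (Fin 8 → ℝ))) := by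
  refine ⟨fun K hK => main_bound hK, ⟨zfin zK0, clique_std c_s7.2.1⟩, fun K hK => main_eleven hK, ?_,
    fun K1 K2 h1 c1 h2 c2 => ?_⟩
  · rw [← FX_card, ← Set.ncard_coe_finset]
    congr 1
    ext K
    simp [mem_FX]
  · obtain ⟨w, hw, h⟩ := main_trans h1 c1 h2 c2
    exact ⟨w, hw, by rw [← coe_wim, h]⟩
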